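/- Let (M, A) be a collar pair, let B be a Hausdorff topological space, let f : A → B be a continuous map, and let N := M ∪_f B be the adjunction space. Then (N, B) is a collar pair. -/

import Mathlib

/-!
A subset of `N = M ∪_f B` is open exactly when its traces on `M` and on `B` are open, so open
sets of `N` are built from open sets `U` of `M` and `W` of `B` with `U ∩ A = f⁻¹ W`
(`adjSet`).

Separation: a point of `M - A` is separated from `A` by some `U` and `V`, hence from `B` by
`U` and `V ⊔ B` (`adj_separated`); two points of `M - A` are separated inside the open set
`M - A`; two points of `B` are separated by `W`, `W'` in `B`, and these become open in `N`
after adding their preimages under `f ∘ r`, where `r` retracts the collar onto `A`.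

Collar: the homotopy on `C` fixes `A`, so it glues with the constant homotopy on `B` to a
deformation of the image of `C ⊔ B`. It is encoded as a map from `N` to the paths in `N`
(`adjTrack`), whose continuity on the collar is checked on `M` and `B` separately and then
uncurried by evaluation, `[0, 1]` being locally compact. The retraction onto `B` is its value
at time `0`.
-/

/-!
Formalization note: a smooth connected complex algebraic variety, endowed with its
analytic topology, is here modelled as a connected Hausdorff complex analytic manifold
`X` (charted on a complex normed space `E`); relative singular (co)homology with `ℚ`
coefficients is defined via the singular chain complex, and relative cohomology is
identified with the `ℚ`-linear dual of relative homology (universal coefficients over a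
field).
-/

open CategoryTheory CategoryTheory.Limits AlgebraicTopology
open scoped Manifold

attribute [local instance] Path.Homotopic.setoid

set_option linter.unusedSectionVars false

noncomputable section

/-- A pair `(M, A)` is a *collar pair* if (a) `M` is Hausdorff, (b) every point of
`M - A` can be separated from `A` by disjoint neighbourhoods, and (c) there is an open
neighbourhood `C` of `A` in `M` strictly containing `A` of which `A` is a strong
deformation retract. -/
def IsCollarPair (M : Type*) [TopologicalSpace M] (A : Set M) : Prop :=
  T2Space M ∧
  (∀ x ∉ A, ∃ U V : Set M, IsOpen U ∧ IsOpen V ∧ x ∈ U ∧ A ⊆ V ∧ Disjoint U V) ∧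
  (∃ C : Set M, IsOpen C ∧ ∃ hAC : A ⊆ C, A ≠ C ∧
    ∃ r : C(C, A),
      (∀ a : A, r (Set.inclusion hAC a) = a) ∧
      Nonempty (((⟨Set.inclusion hAC, continuous_inclusion hAC⟩ : C(A, C)).comp r).HomotopyRel
        (ContinuousMap.id C) {c : C | (c : M) ∈ A}))

section Adjunction

variable {M B : Type} [TopologicalSpace M] [TopologicalSpace B]

/-- The relation identifying `a ∈ A ⊆ M` with `f(a) ∈ B`. -/
def adjRel (A : Set M) (f : C(A, B)) : (M ⊕ B) → (M ⊕ B) → Prop :=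
  fun p q => ∃ a : A, p = Sum.inl (a : M) ∧ q = Sum.inr (f a)

/-- The adjunction space `N = M ∪_f B`, quotient of `M ⊔ B` by the identification
`a ∼ f(a)` for `a ∈ A`. -/
def AdjSpace (A : Set M) (f : C(A, B)) : Type := Quot (adjRel A f)

instance (A : Set M) (f : C(A, B)) : TopologicalSpace (AdjSpace A f) :=
  instTopologicalSpaceQuot

/-- The canonical map `M → M ∪_f B` (the map of pairs `(M, A) → (N, B)`). -/
def adjOfM (A : Set M) (f : C(A, B)) : C(M, AdjSpace A f) :=
  ⟨fun m => Quot.mk _ (Sum.inl m), continuous_quot_mk.comp continuous_inl⟩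

/-- The canonical (injective) map `B → M ∪_f B`. -/
def adjOfB (A : Set M) (f : C(A, B)) : C(B, AdjSpace A f) :=
  ⟨fun b => Quot.mk _ (Sum.inr b), continuous_quot_mk.comp continuous_inr⟩

/-- The subspace `B ⊆ N = M ∪_f B`. -/
def adjB (A : Set M) (f : C(A, B)) : Set (AdjSpace A f) := Set.range (adjOfB A f)

lemma adjOfM_mapsTo (A : Set M) (f : C(A, B)) : Set.MapsTo (adjOfM A f) A (adjB A f) :=
  fun a ha => ⟨f ⟨a, ha⟩, (Quot.sound ⟨⟨a, ha⟩, rfl, rfl⟩).symm⟩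

end Adjunction

section AdjunctionLemmas

variable {M B : Type} [TopologicalSpace M] [TopologicalSpace B]

/-! ### Points and open sets of the adjunction space -/

lemma adj_glue (A : Set M) (f : C(A, B)) (a : A) : adjOfM A f a = adjOfB A f (f a) :=
  Quot.sound ⟨a, rfl, rfl⟩

lemma adj_ind {A : Set M} {f : C(A, B)} {P : AdjSpace A f → Prop}
    (hM : ∀ m, P (adjOfM A f m)) (hB : ∀ b, P (adjOfB A f b)) (n : AdjSpace A f) : P n := by
  rcases n with ⟨m | b⟩
  · exact hM m
  · exact hB b

lemma adj_isOpen_iff {A : Set M} {f : C(A, B)} {S : Set (AdjSpace A f)} :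
    IsOpen S ↔ IsOpen (adjOfM A f ⁻¹' S) ∧ IsOpen (adjOfB A f ⁻¹' S) :=
  isQuotientMap_quot_mk.isOpen_preimage.symm.trans isOpen_sum_iff

/-- A point of the adjunction space outside `B` comes from a point of `M` outside `A`. -/
lemma adj_exists_of_notMem {A : Set M} {f : C(A, B)} {x : AdjSpace A f} (hx : x ∉ adjB A f) :
    ∃ m, m ∉ A ∧ adjOfM A f m = x := by
  induction x using adj_ind with
  | hM m => exact ⟨m, fun h => hx (adjOfM_mapsTo A f h), rfl⟩
  | hB b => exact absurd ⟨b, rfl⟩ hx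

/-- The function on the adjunction space glued from functions on `M` and `B` that agree
along `f`. -/
def adjLift {Z : Type*} (A : Set M) (f : C(A, B)) (g : M → Z) (k : B → Z)
    (h : ∀ a : A, g a = k (f a)) : AdjSpace A f → Z :=
  Quot.lift (Sum.elim g k) (by rintro _ _ ⟨a, rfl, rfl⟩; exact h a)

/-- The subset of the adjunction space with trace `U` on `M` and `W` on `B`; the
compatibility condition says that `U ⊔ W` is saturated. -/
def adjSet (A : Set M) (f : C(A, B)) (U : Set M) (W : Set B)
    (h : ∀ a : A, (a : M) ∈ U ↔ f a ∈ W) : Set (AdjSpace A f) :=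
  {n | adjLift A f (· ∈ U) (· ∈ W) (fun a => propext (h a)) n}

section
variable {A : Set M} {f : C(A, B)} {U U' : Set M} {W W' : Set B}
  {h : ∀ a : A, (a : M) ∈ U ↔ f a ∈ W} {h' : ∀ a : A, (a : M) ∈ U' ↔ f a ∈ W'}

@[simp] lemma adjOfM_mem_adjSet {m : M} : adjOfM A f m ∈ adjSet A f U W h ↔ m ∈ U := Iff.rfl

@[simp] lemma adjOfB_mem_adjSet {b : B} : adjOfB A f b ∈ adjSet A f U W h ↔ b ∈ W := Iff.rfl

lemma isOpen_adjSet (hU : IsOpen U) (hW : IsOpen W) : IsOpen (adjSet A f U W h) :=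
  adj_isOpen_iff.2 ⟨hU, hW⟩

lemma disjoint_adjSet (hU : Disjoint U U') (hW : Disjoint W W') :
    Disjoint (adjSet A f U W h) (adjSet A f U' W' h') := by
  rw [Set.disjoint_left] at *
  intro n
  induction n using adj_ind with
  | hM m => exact hU (a := m)
  | hB b => exact hW (a := b)

end

/-! ### Separation -/

/-- A point of `M` separated from `A` stays separated from `B`: neighbourhoods `U`, `V`
in `M` give the saturated open sets `U` and `V ⊔ B`. -/
lemma adj_separated {A : Set M} {f : C(A, B)}
    (hb : ∀ x ∉ A, ∃ U V : Set M, IsOpen U ∧ IsOpen V ∧ x ∈ U ∧ A ⊆ V ∧ Disjoint U V)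
    {x : AdjSpace A f} (hx : x ∉ adjB A f) :
    ∃ U V : Set (AdjSpace A f), IsOpen U ∧ IsOpen V ∧ x ∈ U ∧ adjB A f ⊆ V ∧ Disjoint U V := by
  obtain ⟨m, hm, rfl⟩ := adj_exists_of_notMem hx
  obtain ⟨U, V, hU, hV, hmU, hAV, hUV⟩ := hb m hm
  refine ⟨adjSet A f U ∅ ?_, adjSet A f V Set.univ ?_, isOpen_adjSet hU isOpen_empty,
    isOpen_adjSet hV isOpen_univ, hmU, ?_, disjoint_adjSet hUV (Set.empty_disjoint _)⟩
  · intro a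
    exact iff_of_false (fun h => Set.disjoint_left.1 hUV h (hAV a.2)) (Set.notMem_empty _)
  · intro a
    exact iff_of_true (hAV a.2) (Set.mem_univ _)
  · rintro _ ⟨b, rfl⟩
    exact Set.mem_univ b

/-- An open subset of `B` extends to an open subset of the adjunction space by pulling it
back to the collar along the retraction. -/
def adjThicken (A : Set M) (f : C(A, B)) {C : Set M} (hAC : A ⊆ C) (r : C(C, A))
    (hr : ∀ a : A, r (Set.inclusion hAC a) = a) (W : Set B) : Set (AdjSpace A f) :=
  adjSet A f (Subtype.val '' ((f.comp r) ⁻¹' W)) W (by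
    intro a
    constructor
    · rintro ⟨c, hc, hca⟩
      obtain rfl : c = Set.inclusion hAC a := Subtype.ext hca
      simpa [hr] using hc
    · intro h
      exact ⟨Set.inclusion hAC a, by simpa [hr] using h, rfl⟩)

lemma adj_t2 [T2Space B] {A : Set M} (hMA : IsCollarPair M A) (f : C(A, B)) :
    T2Space (AdjSpace A f) := by
  obtain ⟨hT, hb, C, hC, hAC, -, r, hr, -⟩ := hMA
  refine ⟨fun x y hxy => ?_⟩
  by_cases hx : x ∈ adjB A f <;> by_cases hy : y ∈ adjB A f
  · obtain ⟨b, rfl⟩ := hx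
    obtain ⟨b', rfl⟩ := hy
    obtain ⟨W, W', hW, hW', hbW, hbW', hWW⟩ := t2_separation (fun h => hxy (congrArg _ h) : b ≠ b')
    refine ⟨adjThicken A f hAC r hr W, adjThicken A f hAC r hr W', ?_, ?_, hbW, hbW', ?_⟩
    · exact isOpen_adjSet (hC.isOpenMap_subtype_val _ (hW.preimage (f.comp r).continuous)) hW
    · exact isOpen_adjSet (hC.isOpenMap_subtype_val _ (hW'.preimage (f.comp r).continuous)) hW'
    · exact disjoint_adjSet
        ((Set.disjoint_image_iff Subtype.val_injective).2 (hWW.preimage _)) hWW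
  · obtain ⟨U, V, hU, hV, hyU, hBV, hUV⟩ := adj_separated hb hy
    exact ⟨V, U, hV, hU, hBV hx, hyU, hUV.symm⟩
  · obtain ⟨U, V, hU, hV, hxU, hBV, hUV⟩ := adj_separated hb hx
    exact ⟨U, V, hU, hV, hxU, hBV hy, hUV⟩
  · obtain ⟨m, hm, rfl⟩ := adj_exists_of_notMem hx
    obtain ⟨m', hm', rfl⟩ := adj_exists_of_notMem hy
    obtain ⟨U, U', hU, hU', hmU, hmU', hUU⟩ :=
      t2_separation (fun h => hxy (congrArg _ h) : m ≠ m')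
    have hA : IsOpen Aᶜ := by
      rw [isOpen_iff_forall_mem_open]
      intro z hz
      obtain ⟨S, T, hS, -, hzS, hAT, hST⟩ := hb z hz
      exact ⟨S, fun s hs h => Set.disjoint_left.1 hST hs (hAT h), hS, hzS⟩
    have key : ∀ (U : Set M) (a : A), (a : M) ∈ U ∩ Aᶜ ↔ f a ∈ (∅ : Set B) := fun U a =>
      iff_of_false (fun h => h.2 a.2) (Set.notMem_empty _)
    exact ⟨adjSet A f (U ∩ Aᶜ) ∅ (key U), adjSet A f (U' ∩ Aᶜ) ∅ (key U'),
      isOpen_adjSet (hU.inter hA) isOpen_empty, isOpen_adjSet (hU'.inter hA) isOpen_empty,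
      ⟨hmU, hm⟩, ⟨hmU', hm'⟩,
      disjoint_adjSet (hUU.mono Set.inter_subset_left Set.inter_subset_left)
        (Set.empty_disjoint _)⟩

/-! ### The collar and its deformation -/

/-- The collar of `B` in the adjunction space: the image of `C ⊔ B`. -/
def adjCollar (A : Set M) (f : C(A, B)) {C : Set M} (hAC : A ⊆ C) : Set (AdjSpace A f) :=
  adjSet A f C Set.univ (fun a => iff_of_true (hAC a.2) (Set.mem_univ _))

/-- The track of a point of the collar of `B` under the glued deformation, as a path in
the adjunction space: points of `C` follow `H` and points of `B` stay fixed. Outside the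
collar the value is a junk constant path. -/
def adjTrack (A : Set M) (f : C(A, B)) {C : Set M} (hAC : A ⊆ C) (H : C(C, C(unitInterval, C)))
    (hH : ∀ (a : A) (t : unitInterval), H (Set.inclusion hAC a) t = Set.inclusion hAC a) :
    AdjSpace A f → C(unitInterval, AdjSpace A f) :=
  open Classical in
  adjLift A f
    (fun m => if h : m ∈ C then
      (adjOfM A f).comp ((⟨Subtype.val, continuous_subtype_val⟩ : C(C, M)).comp (H ⟨m, h⟩))
      else ContinuousMap.const _ (adjOfM A f m))
    (fun b => ContinuousMap.const _ (adjOfB A f b))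
    (by
      intro a
      ext t
      have := hH a t
      simp only [Set.inclusion] at this
      simp [hAC a.2, this, adj_glue])

section
variable {A : Set M} {f : C(A, B)} {C : Set M} {hAC : A ⊆ C} {H : C(C, C(unitInterval, C))}
  {hH : ∀ (a : A) (t : unitInterval), H (Set.inclusion hAC a) t = Set.inclusion hAC a}

lemma adjTrack_ofM_eq (c : C) : adjTrack A f hAC H hH (adjOfM A f c) =
    (adjOfM A f).comp ((⟨Subtype.val, continuous_subtype_val⟩ : C(C, M)).comp (H c)) :=
  dif_pos c.2

lemma adjTrack_ofM (c : C) (t : unitInterval) :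
    adjTrack A f hAC H hH (adjOfM A f c) t = adjOfM A f (H c t) := by
  rw [adjTrack_ofM_eq]; rfl

lemma adjTrack_ofB_eq (b : B) : adjTrack A f hAC H hH (adjOfB A f b) =
    ContinuousMap.const _ (adjOfB A f b) := rfl

lemma adjTrack_ofB (b : B) (t : unitInterval) :
    adjTrack A f hAC H hH (adjOfB A f b) t = adjOfB A f b := rfl

lemma isOpen_adjCollar (hC : IsOpen C) : IsOpen (adjCollar A f hAC) :=
  isOpen_adjSet hC isOpen_univ

/-- Working with path-valued maps means that continuity is tested on the quotient itself,
so no statement about products of quotient maps is needed. -/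
lemma continuousOn_adjTrack (hC : IsOpen C) :
    ContinuousOn (adjTrack A f hAC H hH) (adjCollar A f hAC) := by
  rw [continuousOn_open_iff (isOpen_adjCollar hC)]
  intro O hO
  rw [adj_isOpen_iff]
  constructor
  · let G : C → C(unitInterval, AdjSpace A f) := fun c =>
      (adjOfM A f).comp ((⟨Subtype.val, continuous_subtype_val⟩ : C(C, M)).comp (H c))
    have hG : Continuous G := (ContinuousMap.continuous_postcomp _).comp
      ((ContinuousMap.continuous_postcomp _).comp H.continuous)
    convert hC.isOpenMap_subtype_val _ (hO.preimage hG) using 1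
    ext m
    constructor
    · rintro ⟨hm, hmO⟩
      refine ⟨⟨m, hm⟩, ?_, rfl⟩
      have := adjTrack_ofM_eq (f := f) (hH := hH) ⟨m, hm⟩
      rw [Set.mem_preimage, this] at hmO
      exact hmO
    · rintro ⟨c, hc, rfl⟩
      refine ⟨c.2, ?_⟩
      rw [Set.mem_preimage, adjTrack_ofM_eq]
      exact hc
  · have hG : Continuous fun b => ContinuousMap.const unitInterval (adjOfB A f b) :=
      ContinuousMap.continuous_const'.comp (adjOfB A f).continuous
    convert hO.preimage hG using 1
    ext b
    exact and_iff_right (Set.mem_univ b)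

lemma adjTrack_mem (x : AdjSpace A f) (hx : x ∈ adjCollar A f hAC) (t : unitInterval) :
    adjTrack A f hAC H hH x t ∈ adjCollar A f hAC := by
  induction x using adj_ind with
  | hM m => rw [adjTrack_ofM ⟨m, hx⟩]; exact (H ⟨m, hx⟩ t).2
  | hB b => exact Set.mem_univ b

lemma adjTrack_of_mem_adjB {x : AdjSpace A f} (hx : x ∈ adjB A f) (t : unitInterval) :
    adjTrack A f hAC H hH x t = x := by
  obtain ⟨b, rfl⟩ := hx
  rfl

lemma adjTrack_one (h1 : ∀ c, H c 1 = c) (x : AdjSpace A f) (hx : x ∈ adjCollar A f hAC) :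
    adjTrack A f hAC H hH x 1 = x := by
  induction x using adj_ind with
  | hM m => rw [adjTrack_ofM ⟨m, hx⟩, h1]
  | hB b => rfl

lemma adjTrack_zero (h0 : ∀ c, (H c 0 : M) ∈ A) (x : AdjSpace A f)
    (hx : x ∈ adjCollar A f hAC) : adjTrack A f hAC H hH x 0 ∈ adjB A f := by
  induction x using adj_ind with
  | hM m => rw [adjTrack_ofM ⟨m, hx⟩]; exact adjOfM_mapsTo A f (h0 _)
  | hB b => exact ⟨b, rfl⟩

lemma adjB_subset_adjCollar : adjB A f ⊆ adjCollar A f hAC := by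
  rintro _ ⟨b, rfl⟩
  exact Set.mem_univ b

lemma adjOfM_notMem_adjB {m : M} (hm : m ∉ A) : adjOfM A f m ∉ adjB A f := by
  rintro ⟨b, hb⟩
  -- `M - A` is the trace of a saturated set that misses `B`.
  have h : adjOfM A f m ∈ adjSet A f Aᶜ ∅ (fun a => iff_of_false (fun h => h a.2) id) := hm
  rw [← hb] at h
  exact h

end

end AdjunctionLemmas

/-- **Statement 9.** If `(M, A)` is a collar pair, `B` is Hausdorff and `f : A → B` is
continuous, then `(M ∪_f B, B)` is a collar pair. -/
theorem adjSpace_isCollarPair {M B : Type} [TopologicalSpace M] [TopologicalSpace B]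
    [T2Space B] (A : Set M) (hMA : IsCollarPair M A) (f : C(A, B)) :
    IsCollarPair (AdjSpace A f) (adjB A f) := by
  obtain ⟨-, hb, C, hC, hAC, hne, r, -, ⟨F⟩⟩ := id hMA
  refine ⟨adj_t2 hMA f, fun x hx => adj_separated hb hx, adjCollar A f hAC,
    isOpen_adjCollar hC, adjB_subset_adjCollar, ?_, ?_⟩
  · obtain ⟨m, hmC, hmA⟩ := Set.exists_of_ssubset (hAC.ssubset_of_ne hne)
    intro h
    have hm : adjOfM A f m ∈ adjCollar A f hAC := hmC
    exact adjOfM_notMem_adjB hmA (h ▸ hm)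
  let H : C(C, C(unitInterval, C)) :=
    ContinuousMap.curry ⟨fun p => F (p.2, p.1), by fun_prop⟩
  have hH : ∀ (a : A) (t : unitInterval), H (Set.inclusion hAC a) t = Set.inclusion hAC a :=
    fun a t => F.eq_snd t a.2
  have h1 : ∀ c, H c 1 = c := fun c => F.apply_one c
  have h0 : ∀ c, (H c 0 : M) ∈ A := fun c => by
    have : H c 0 = Set.inclusion hAC (r c) := F.apply_zero c
    rw [this]
    exact (r c).2
  have hcont : Continuous fun c : adjCollar A f hAC => adjTrack A f hAC H hH c :=
    continuousOn_iff_continuous_domRestrict.1 (continuousOn_adjTrack (hH := hH) hC)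
  have hev : Continuous fun p : unitInterval × adjCollar A f hAC =>
      adjTrack A f hAC H hH p.2 p.1 := by
    have := (hcont.comp continuous_snd : Continuous fun p : unitInterval × adjCollar A f hAC =>
      adjTrack A f hAC H hH p.2)
    exact this.eval continuous_fst
  let R : C(adjCollar A f hAC, adjB A f) :=
    ⟨fun c => ⟨adjTrack A f hAC H hH c 0, adjTrack_zero (hH := hH) h0 c.1 c.2⟩,
      (hev.comp (Continuous.prodMk_right 0)).subtype_mk _⟩
  refine ⟨R, fun a => Subtype.ext (adjTrack_of_mem_adjB a.2 0), ⟨?_⟩⟩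
  exact
    { toFun := fun p => ⟨adjTrack A f hAC H hH p.2 p.1, adjTrack_mem (hH := hH) p.2.1 p.2.2 p.1⟩
      continuous_toFun := hev.subtype_mk _
      map_zero_left := fun c => rfl
      map_one_left := fun c => Subtype.ext (adjTrack_one (hH := hH) h1 c.1 c.2)
      prop' := fun t c hc => Subtype.ext <| by
        exact (adjTrack_of_mem_adjB hc t).trans (adjTrack_of_mem_adjB hc 0).symm }

end
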